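/- arXiv:1304.1458 — 2 statements merged into one kernel-verified Lean document; each statement's English description precedes it below -/
import Mathlib

section
/- Let T ≥ 216 be a real number and let G be a finite simple graph with T₃ triangles, where T₃ ≥ T. Suppose some edge e = {v, w} of G lies in at least T₃^{2/3} triangles. Set p = 6/T^{1/3} and consider the random subgraph H obtained by keeping each edge of G independently with probability p. Then the probability that for every triangle {v, w, u} of G containing e, at least one of the two edges {v, u}, {w, u} is not kept in H, is at most 0.001. -/
/-!
The triangles on the edge `vw` correspond to the common neighbours `u` of `v` and `w`, and
different common neighbours use disjoint pairs of edges `{vu, wu}`. Hence the events "both edges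
of the pair are kept" are independent of probability `p²`, and the event in question, that they
all fail, has probability `(1 - p²)^N` with `N ≥ T₃^(2/3) ≥ T^(2/3)` the number of common
neighbours. As `p² = 36 / T^(2/3)`, this is at most `exp (-p² N) ≤ exp (-36) < 0.001`.

The independence is `measure_forall_not_floor` (an abstract statement on product measures, for any
injectively indexed family of pairs of coordinates); the count of common neighbours is
`card_filter_triangles_le`.
-/

open Finset SimpleGraph MeasureTheory

/-- The Bernoulli measure on `Bool` giving probability `p` to `true`
and `1 - p` to `false`. -/
noncomputable def bernoulliMeasure (p : ℝ) : Measure Bool :=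
  ENNReal.ofReal p • Measure.dirac true + ENNReal.ofReal (1 - p) • Measure.dirac false

/-- The product probability space modelling the random subgraph `H` of `G`:
each edge of `G` is kept (`true`) independently with probability `p`. -/
noncomputable def edgeKeepMeasure {V : Type*} [Fintype V] [DecidableEq V]
    (G : SimpleGraph V) [DecidableRel G.Adj] (p : ℝ) :
    Measure ({e // e ∈ G.edgeFinset} → Bool) :=
  Measure.pi fun _ => bernoulliMeasure p

theorem isProbabilityMeasure_bernoulliMeasure {p : ℝ} (h0 : 0 ≤ p) (h1 : p ≤ 1) :
    IsProbabilityMeasure (bernoulliMeasure p) := by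
  constructor
  simp [bernoulliMeasure, ← ENNReal.ofReal_add h0 (sub_nonneg.2 h1)]

theorem bernoulliMeasure_singleton_true (p : ℝ) :
    bernoulliMeasure p {true} = ENNReal.ofReal p := by
  simp [bernoulliMeasure]

/-- For disjoint pairs `{a i, b i}` of coordinates (disjointness is the injectivity of
`Sum.elim a b`), the events "both coordinates of pair `i` are `true`" are independent of
probability `p²`, so the probability that none of them holds is `(1 - p²)^|ι|`. -/
theorem measure_forall_not_floor {E ι : Type*} [Fintype E] [Fintype ι]
    {p : ℝ} (h0 : 0 ≤ p) (h1 : p ≤ 1) (a b : ι → E) (hab : Function.Injective (Sum.elim a b)) :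
    Measure.pi (fun _ : E => bernoulliMeasure p) {ω | ∀ i, ¬(ω (a i) = true ∧ ω (b i) = true)}
      = ENNReal.ofReal (1 - p ^ 2) ^ Fintype.card ι := by
  classical
  have := isProbabilityMeasure_bernoulliMeasure h0 h1
  set μ := Measure.pi (fun _ : E => bernoulliMeasure p)
  let S : ι → Set (E → Bool) := fun i => {ω | ω (a i) = true ∧ ω (b i) = true}
  -- An intersection of these events is a box constraining two coordinates per pair.
  have hbox (s : Finset ι) : μ (⋂ i ∈ s, S i) = (ENNReal.ofReal p ^ 2) ^ #s := by
    have : (⋂ i ∈ s, S i)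
        = (((s.disjSum s).image (Sum.elim a b) : Finset E) : Set E).pi (fun _ => {true}) := by
      ext ω
      simp only [S, Set.mem_iInter, Set.mem_ofPred_eq, Set.mem_pi, Finset.mem_coe,
        Finset.mem_image, Finset.mem_disjSum, Set.mem_singleton_iff]
      constructor
      · rintro h _ ⟨_, ⟨i, hi, rfl⟩ | ⟨i, hi, rfl⟩, rfl⟩
        exacts [(h i hi).1, (h i hi).2]
      · exact fun h i hi =>
          ⟨h _ ⟨.inl i, .inl ⟨i, hi, rfl⟩, rfl⟩, h _ ⟨.inr i, .inr ⟨i, hi, rfl⟩, rfl⟩⟩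
    rw [this, Measure.pi_pi_finset]
    simp only [bernoulliMeasure_singleton_true, Finset.prod_const]
    rw [Finset.card_image_of_injective _ hab, Finset.card_disjSum, ← two_mul, pow_mul]
  have hS (i : ι) : μ (S i) = ENNReal.ofReal p ^ 2 := by simpa using hbox {i}
  have hmeas (i : ι) : MeasurableSet (S i) := (Set.toFinite _).measurableSet
  have hind : ProbabilityTheory.iIndepSet S μ := by
    rw [ProbabilityTheory.iIndepSet_iff_meas_biInter hmeas]
    intro s
    simp [hbox, hS]
  have hcompl := (ProbabilityTheory.iIndepSet_iff _ _).1 hind Finset.univ (f := fun i => (S i)ᶜ)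
    fun i _ => (MeasurableSpace.measurableSet_generateFrom (Set.mem_singleton (S i))).compl
  have hset : {ω : E → Bool | ∀ i, ¬(ω (a i) = true ∧ ω (b i) = true)}
      = ⋂ i ∈ Finset.univ, (S i)ᶜ := by
    ext ω; simp [S]
  rw [hset, hcompl]
  simp only [prob_compl_eq_one_sub (hmeas _), hS, Finset.prod_const, Finset.card_univ]
  rw [ENNReal.ofReal_sub _ (sq_nonneg p), ENNReal.ofReal_one, ENNReal.ofReal_pow h0]

/-- A triangle containing `v` and `w` is `{v, w, u}` for some common neighbour `u`. -/
theorem card_filter_triangles_le {V : Type*} [Fintype V] [DecidableEq V]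
    (G : SimpleGraph V) [DecidableRel G.Adj] {v w : V} (hvw : G.Adj v w) :
    #((G.cliqueFinset 3).filter (fun t => v ∈ t ∧ w ∈ t))
      ≤ Fintype.card {u : V // G.Adj v u ∧ G.Adj w u} := by
  rw [Fintype.card_subtype]
  refine (Finset.card_le_card (t := image (fun u => {v, w, u}) _) fun t ht => ?_).trans
    Finset.card_image_le
  obtain ⟨ht, hv, hw⟩ := Finset.mem_filter.1 ht
  rw [mem_cliqueFinset_iff] at ht
  have hsub : ({v, w} : Finset V) ⊆ t := by
    simp [Finset.insert_subset_iff, hv, hw]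
  obtain ⟨u, hu⟩ : ∃ u, t \ {v, w} = {u} := by
    rw [← Finset.card_eq_one, Finset.card_sdiff_of_subset hsub, ht.card_eq,
      Finset.card_pair hvw.ne]
  have htu : {v, w, u} = t := by
    have := Finset.union_sdiff_of_subset hsub
    rw [hu] at this
    rw [← this]
    ext; simp
  subst htu
  have := is3Clique_triple_iff.1 ht
  exact Finset.mem_image.2 ⟨u, by simp [this.2.1, this.2.2], rfl⟩

theorem one_sub_sq_pow_le {T p : ℝ} (hT : 216 ≤ T) (hp : p = 6 / T ^ ((1 : ℝ) / 3))
    (hp1 : p ≤ 1) (hp0 : 0 ≤ p) {N : ℕ} (hN : T ^ ((2 : ℝ) / 3) ≤ N) :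
    (1 - p ^ 2) ^ N ≤ 0.001 := by
  have hT0 : 0 < T := by linarith
  have hpN : 36 ≤ N * p ^ 2 := by
    have hsq : (T ^ ((1 : ℝ) / 3)) ^ 2 = T ^ ((2 : ℝ) / 3) := by
      rw [← Real.rpow_natCast, ← Real.rpow_mul hT0.le]; norm_num
    have hpos : 0 < T ^ ((2 : ℝ) / 3) := Real.rpow_pos_of_pos hT0 _
    rw [hp, div_pow, hsq, ← mul_div_assoc, le_div_iff₀ hpos]
    nlinarith
  calc (1 - p ^ 2) ^ N ≤ Real.exp (-p ^ 2) ^ N :=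
        pow_le_pow_left₀ (by nlinarith) (Real.one_sub_le_exp_neg _) _
    _ = Real.exp (-(N * p ^ 2)) := by rw [← Real.exp_nat_mul]; ring_nf
    _ ≤ Real.exp (-36) := Real.exp_le_exp.2 (by linarith)
    _ ≤ 0.001 := by
        have h2 : (2 : ℝ) ^ 36 ≤ Real.exp 36 := by
          have := Real.add_one_le_exp 1
          calc (2 : ℝ) ^ 36 ≤ Real.exp 1 ^ 36 := pow_le_pow_left₀ (by norm_num) (by linarith) _
            _ = Real.exp 36 := by rw [← Real.exp_nat_mul]; norm_num
        rw [Real.exp_neg]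
        refine (inv_anti₀ (by positivity) h2).trans (by norm_num)

/-- **a tall tower keeps a floor.** Let `T ≥ 216`, let `G` have `T₃ ≥ T`
triangles, and suppose the edge `e = {v, w}` of `G` lies in at least `T₃^(2/3)` triangles.
Keeping each edge independently with probability `p = 6 / T^(1/3)`, the probability that
for every triangle `{v, w, u}` of `G` containing `e` at least one of the two edges
`{v, u}`, `{w, u}` is not kept, is at most `0.001`. -/
theorem prob_no_floor_survives_le {V : Type*} [Fintype V] [DecidableEq V]
    (G : SimpleGraph V) [DecidableRel G.Adj] (T : ℝ) (hT : 216 ≤ T)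
    (hT₃ : T ≤ ((G.cliqueFinset 3).card : ℝ))
    (v w : V) (hvw : G.Adj v w)
    (hTall : ((G.cliqueFinset 3).card : ℝ) ^ ((2 : ℝ) / 3)
      ≤ (((G.cliqueFinset 3).filter (fun t => v ∈ t ∧ w ∈ t)).card : ℝ))
    (p : ℝ) (hp : p = 6 / T ^ ((1 : ℝ) / 3)) :
    edgeKeepMeasure G p
        {ω | ∀ u : V, G.Adj v u → G.Adj w u →
          ∃ e : {e // e ∈ G.edgeFinset},
            ((e : Sym2 V) = s(v, u) ∨ (e : Sym2 V) = s(w, u)) ∧ ω e = false}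
      ≤ ENNReal.ofReal 0.001 := by
  have hT0 : 0 < T := by linarith
  have h6 : 6 ≤ T ^ ((1 : ℝ) / 3) := by
    calc (6 : ℝ) = (6 ^ (3 : ℝ)) ^ ((1 : ℝ) / 3) := by
          rw [← Real.rpow_mul (by norm_num)]; norm_num
      _ ≤ T ^ ((1 : ℝ) / 3) :=
          Real.rpow_le_rpow (by positivity) (by norm_num; exact hT) (by norm_num)
  have hp0 : 0 ≤ p := by rw [hp]; positivity
  have hp1 : p ≤ 1 := by rw [hp]; exact (div_le_one (by linarith)).2 h6
  let a : {u : V // G.Adj v u ∧ G.Adj w u} → {e // e ∈ G.edgeFinset} :=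
    fun u => ⟨s(v, u), by simpa using u.2.1⟩
  let b : {u : V // G.Adj v u ∧ G.Adj w u} → {e // e ∈ G.edgeFinset} :=
    fun u => ⟨s(w, u), by simpa using u.2.2⟩
  have hab : Function.Injective (Sum.elim a b) := by
    have hne := hvw.ne
    rintro (⟨x, hx1, hx2⟩ | ⟨x, hx1, hx2⟩) (⟨y, hy1, hy2⟩ | ⟨y, hy1, hy2⟩) h <;>
      have h' := congrArg Subtype.val h <;>
      have := hx1.ne <;> have := hx2.ne <;> have := hy1.ne <;> have := hy2.ne <;>
      simp [a, b] at h' ⊢ <;> grind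
  have hset : {ω : {e // e ∈ G.edgeFinset} → Bool | ∀ u : V, G.Adj v u → G.Adj w u →
          ∃ e : {e // e ∈ G.edgeFinset},
            ((e : Sym2 V) = s(v, u) ∨ (e : Sym2 V) = s(w, u)) ∧ ω e = false}
      ⊆ {ω | ∀ i, ¬(ω (a i) = true ∧ ω (b i) = true)} := by
    rintro ω hω i ⟨ha, hb⟩
    obtain ⟨e, he | he, hf⟩ := hω i i.2.1 i.2.2
    · rw [show e = a i from Subtype.ext he, ha] at hf
      cases hf
    · rw [show e = b i from Subtype.ext he, hb] at hf
      cases hf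
  refine (measure_mono hset).trans ?_
  rw [edgeKeepMeasure, measure_forall_not_floor hp0 hp1 a b hab,
    ← ENNReal.ofReal_pow (by nlinarith)]
  refine ENNReal.ofReal_le_ofReal (one_sub_sq_pow_le hT hp hp1 hp0 ?_)
  calc T ^ ((2 : ℝ) / 3) ≤ ((G.cliqueFinset 3).card : ℝ) ^ ((2 : ℝ) / 3) :=
        Real.rpow_le_rpow hT0.le hT₃ (by norm_num)
    _ ≤ _ := hTall
    _ ≤ _ := by exact_mod_cast card_filter_triangles_le G hvw
end

section
/- Let T ≥ 216 be a real number and let G be a finite simple graph with at least T triangles. Set p = 6/T^{1/3} and consider the random subgraph H obtained by keeping each edge of G independently with probability p. Then the probability that every triangle of G has at most one of its three edges kept in H is at most 0.3. -/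
/-!
The event says that no *wedge* (pair of edges lying in a common triangle) is kept. Its probability
is bounded by Chebyshev's inequality applied to the number of kept pairs in a well-chosen family
`F` of wedges: if each edge lies in at most `D` members of `F`, the probability that no member is
kept is at most `(1 + 2 * D * p) / (|F| * p ^ 2)` (`second_moment`).

Write `c = T ^ (1 / 3)`, so that `c ≥ 6` and `p = 6 / c`. Two distinct edges lie in at most one
common triangle (`eq_of_mem_edgesIn`), and this controls both choices of `F`.

* If some edge `e` lies in at least `c ^ 2 / 2` triangles, take for `F` the pairs completing `e` to
  a triangle (`pages`). They are pairwise disjoint, so `D = 1` works, `|F| * p ^ 2 ≥ 18`, and the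
  bound is at most `3 / 18`.
* Otherwise take for `F` all wedges. There are three per triangle, so `|F| * p ^ 2 ≥ 108 * c`, and
  `D = c ^ 2` works, which gives the bound `(1 + 12 * c) / (108 * c)`.
-/

open Finset SimpleGraph MeasureTheory

/-! ### The second-moment bound for pairs -/

lemma isProbabilityMeasure_bernoulliMeasure_s12 {p : ℝ} (hp0 : 0 ≤ p) (hp1 : p ≤ 1) :
    IsProbabilityMeasure (bernoulliMeasure p) := by
  constructor
  simp only [bernoulliMeasure, Measure.coe_add, Measure.coe_smul, Pi.add_apply, Pi.smul_apply,
    measure_univ, smul_eq_mul, mul_one]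
  rw [← ENNReal.ofReal_add hp0 (by linarith)]
  simp

lemma pi_bernoulliMeasure_real_forall_true {ι : Type*} [Fintype ι] [DecidableEq ι] {p : ℝ}
    (hp0 : 0 ≤ p) (hp1 : p ≤ 1) (S : Finset ι) :
    (Measure.pi fun _ : ι => bernoulliMeasure p).real {ω | ∀ e ∈ S, ω e = true} =
      p ^ S.card := by
  have := isProbabilityMeasure_bernoulliMeasure_s12 hp0 hp1
  have hset : {ω : ι → Bool | ∀ e ∈ S, ω e = true} =
      Set.univ.pi fun e => if e ∈ S then {true} else Set.univ := by
    ext ω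
    simp only [Set.mem_ofPred_eq, Set.mem_pi, Set.mem_univ, true_implies]
    refine forall_congr' fun e => ?_
    split_ifs with h <;> simp [h]
  have hone : ∀ e, bernoulliMeasure p (if e ∈ S then {true} else Set.univ) =
      if e ∈ S then ENNReal.ofReal p else 1 := by
    intro e
    split_ifs with h
    · simp [bernoulliMeasure]
    · exact measure_univ
  rw [Measure.real, hset, Measure.pi_pi]
  simp only [hone]
  rw [Finset.prod_ite_mem]
  simp [hp0]

/-- Second-moment bound. If `F` is a family of pairs in which every point lies in at most `D`
pairs, and `X` counts the pairs with both points kept, then `E X = |F| p²` and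
`Var X ≤ |F| p² + 2 D |F| p³`; Chebyshev's inequality bounds the probability of `X = 0`. -/
lemma second_moment {ι : Type*} [Fintype ι] [DecidableEq ι] {p : ℝ}
    (hp0 : 0 < p) (hp1 : p ≤ 1) (F : Finset (Finset ι)) (hF : ∀ f ∈ F, f.card = 2) (D : ℝ)
    (hD0 : 0 ≤ D) (hD : ∀ e, ((F.filter (e ∈ ·)).card : ℝ) ≤ D) :
    (Measure.pi fun _ : ι => bernoulliMeasure p).real {ω | ∀ f ∈ F, ¬ ∀ e ∈ f, ω e = true} *
      (F.card * p ^ 2) ≤ 1 + 2 * D * p := by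
  have := isProbabilityMeasure_bernoulliMeasure_s12 hp0.le hp1
  set μ := Measure.pi fun _ : ι => bernoulliMeasure p with hμ
  let K : Finset ι → Set (ι → Bool) := fun S => {ω | ∀ e ∈ S, ω e = true}
  have hK : ∀ S, μ.real (K S) = p ^ S.card :=
    pi_bernoulliMeasure_real_forall_true hp0.le hp1
  let I : Finset ι → (ι → Bool) → ℝ := fun S => (K S).indicator 1
  have hI : ∀ S, ∫ ω, I S ω ∂μ = p ^ S.card := by
    intro S
    rw [← hK S]
    exact integral_indicator_one (Set.toFinite _).measurableSet
  have hint : ∀ f : (ι → Bool) → ℝ, Integrable f μ := fun f => Integrable.of_finite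
  have hII : ∀ f g ω, I f ω * I g ω = I (f ∪ g) ω := by
    intro f g ω
    have : K (f ∪ g) = K f ∩ K g := by
      ext ω
      simp only [K, Set.mem_ofPred_eq, Set.mem_inter_iff, Finset.mem_union]
      exact ⟨fun h => ⟨fun e he => h e (.inl he), fun e he => h e (.inr he)⟩,
        fun h e he => he.elim (h.1 e) (h.2 e)⟩
    simp only [I, this, Set.inter_indicator_one, Pi.mul_apply]
  set M : ℝ := (F.card : ℝ) with hM
  let X : (ι → Bool) → ℝ := fun ω => ∑ f ∈ F, I f ω
  have hEX : ∫ ω, X ω ∂μ = M * p ^ 2 := by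
    simp only [X]
    rw [integral_finsetSum _ fun f _ => hint _, Finset.sum_congr rfl fun f hf => by
      rw [hI, hF f hf]]
    simp [M]
  -- Pairs of sets contribute `p ^ 2`, `p ^ 3` or `p ^ 4`, as they share two, one or no points.
  have hterm : ∀ f ∈ F, ∀ g ∈ F, p ^ (f ∪ g).card ≤
      p ^ 4 + (if f = g then p ^ 2 else 0) + ∑ e ∈ f, if e ∈ g then p ^ 3 else 0 := by
    intro f hf g hg
    have hS : ∑ e ∈ f, (if e ∈ g then p ^ 3 else 0) = (f ∩ g).card * p ^ 3 := by
      rw [Finset.sum_ite_mem, Finset.sum_const, nsmul_eq_mul]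
    have hc := Finset.card_union_add_card_inter f g
    rw [hF f hf, hF g hg] at hc
    rw [hS]
    have h4 : 0 < p ^ 4 := by positivity
    have h3 : 0 < p ^ 3 := by positivity
    by_cases hfg : f = g
    · subst hfg
      simp only [Finset.union_self, Finset.inter_self, hF f hf, if_true]
      push_cast
      linarith
    · have hlt : (f ∩ g).card < 2 := by
        by_contra! h
        have h1 : f ∩ g = f := Finset.eq_of_subset_of_card_le Finset.inter_subset_left
          (by rw [hF f hf]; exact h)
        have h2 : f ∩ g = g := Finset.eq_of_subset_of_card_le Finset.inter_subset_right
          (by rw [hF g hg]; exact h)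
        exact hfg (h1.symm.trans h2)
      rw [if_neg hfg]
      obtain h | h : (f ∩ g).card = 0 ∨ (f ∩ g).card = 1 := by omega
      · have : (f ∪ g).card = 4 := by omega
        simp [this, h]
      · have : (f ∪ g).card = 3 := by omega
        simp only [this, h]
        push_cast
        linarith
  have hEX2 : ∫ ω, X ω ^ 2 ∂μ ≤ (M * p ^ 2) ^ 2 + M * p ^ 2 + 2 * D * M * p ^ 3 := by
    have h1 : ∫ ω, X ω ^ 2 ∂μ = ∑ f ∈ F, ∑ g ∈ F, p ^ (f ∪ g).card := by
      simp only [X, sq, Finset.sum_mul_sum, hII]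
      rw [integral_finsetSum _ fun f _ => hint _]
      refine Finset.sum_congr rfl fun f _ => ?_
      rw [integral_finsetSum _ fun f _ => hint _]
      exact Finset.sum_congr rfl fun g _ => hI _
    rw [h1]
    have h2 : ∀ f ∈ F, ∑ g ∈ F, p ^ (f ∪ g).card ≤ M * p ^ 4 + p ^ 2 + 2 * D * p ^ 3 := by
      intro f hf
      refine (Finset.sum_le_sum (hterm f hf)).trans ?_
      rw [Finset.sum_add_distrib, Finset.sum_add_distrib, Finset.sum_comm]
      simp only [Finset.sum_const, nsmul_eq_mul, Finset.sum_ite_eq, hf, if_true]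
      have h3 : ∀ e ∈ f, ∑ g ∈ F, (if e ∈ g then p ^ 3 else 0) ≤ D * p ^ 3 := by
        intro e _
        rw [← Finset.sum_filter, Finset.sum_const, nsmul_eq_mul]
        exact mul_le_mul_of_nonneg_right (hD e) (by positivity)
      have h4 := Finset.sum_le_sum h3
      simp only [Finset.sum_const, hF f hf, nsmul_eq_mul] at h4
      push_cast at h4
      linarith
    refine (Finset.sum_le_sum h2).trans (le_of_eq ?_)
    simp only [Finset.sum_const, nsmul_eq_mul]
    ring
  set A : Set (ι → Bool) := {ω | ∀ f ∈ F, ¬ ∀ e ∈ f, ω e = true} with hA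
  have hcheb : μ.real A * (M * p ^ 2) ^ 2 ≤ ∫ ω, (X ω - M * p ^ 2) ^ 2 ∂μ := by
    have h1 : ∫ ω, A.indicator 1 ω * (M * p ^ 2) ^ 2 ∂μ = μ.real A * (M * p ^ 2) ^ 2 := by
      rw [integral_mul_const, integral_indicator_one (Set.toFinite _).measurableSet]
    rw [← h1]
    refine integral_mono (hint _) (hint _) fun ω => ?_
    by_cases hω : ω ∈ A
    · have hX : X ω = 0 := Finset.sum_eq_zero fun f hf =>
        Set.indicator_of_notMem (s := K f) (hω f hf) _
      simp [hω, hX]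
    · simp only [Set.indicator_of_notMem hω, zero_mul]
      positivity
  have hvar : ∫ ω, (X ω - M * p ^ 2) ^ 2 ∂μ = ∫ ω, X ω ^ 2 ∂μ - (M * p ^ 2) ^ 2 := by
    have : ∀ ω, (X ω - M * p ^ 2) ^ 2 =
        X ω ^ 2 - 2 * (M * p ^ 2) * X ω + (M * p ^ 2) ^ 2 := fun ω => by ring
    simp only [this]
    rw [integral_add (hint _) (hint _), integral_sub (hint _) (hint _), integral_const_mul, hEX]
    simp
    ring
  rcases F.card.eq_zero_or_pos with h0 | hpos
  · have : M = 0 := by simp [M, h0]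
    rw [this]
    have : 0 ≤ D * p := by positivity
    linarith
  · have hMpos : 0 < M := by simpa [M] using hpos
    refine le_of_mul_le_mul_right ?_ (show 0 < M * p ^ 2 by positivity)
    linarith

/-! ### Edges and triangles -/

section Triangles

variable {V : Type*} [Fintype V] [DecidableEq V] (G : SimpleGraph V) [DecidableRel G.Adj]

/-- The edges of `G` with both endpoints in the vertex set `t`. -/
def edgesIn (t : Finset V) : Finset {e // e ∈ G.edgeFinset} :=
  Finset.univ.filter fun e => (e : Sym2 V) ∈ t.sym2

lemma mem_edgesIn {t : Finset V} {e : {e // e ∈ G.edgeFinset}} :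
    e ∈ edgesIn G t ↔ ∀ v ∈ (e : Sym2 V), v ∈ t := by
  simp [edgesIn, Finset.mem_sym2_iff]

lemma card_edgesIn {t : Finset V} (ht : t ∈ G.cliqueFinset 3) : (edgesIn G t).card = 3 := by
  obtain ⟨a, b, c, hab, hac, hbc, rfl⟩ := is3Clique_iff.1 ((mem_cliqueFinset_iff).1 ht)
  have h : edgesIn G {a, b, c} =
      {⟨s(a, b), by simpa using hab⟩, ⟨s(a, c), by simpa using hac⟩,
        ⟨s(b, c), by simpa using hbc⟩} := by
    ext ⟨e, he⟩
    induction e with | _ x y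
    have hxy : G.Adj x y := by simpa using he
    have hne := hxy.ne
    simp only [mem_edgesIn, Sym2.mem_iff, Finset.mem_insert, Finset.mem_singleton,
      Subtype.mk.injEq, Sym2.eq_iff, forall_eq_or_imp, forall_eq]
    grind
  rw [h, Finset.card_eq_three]
  refine ⟨_, _, _, ?_, ?_, ?_, rfl⟩ <;>
    simp [Subtype.ext_iff, hab.ne', hbc.ne', hab.ne, hac.ne, hbc.ne]

/-- Two distinct edges lie in at most one common triangle. -/
lemma eq_of_mem_edgesIn {t u : Finset V} (ht : t ∈ G.cliqueFinset 3) (hu : u ∈ G.cliqueFinset 3)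
    {d e : {e // e ∈ G.edgeFinset}} (hde : d ≠ e) (hdt : d ∈ edgesIn G t) (het : e ∈ edgesIn G t)
    (hdu : d ∈ edgesIn G u) (heu : e ∈ edgesIn G u) : t = u := by
  have ht3 := ((mem_cliqueFinset_iff).1 ht).card_eq
  have hu3 := ((mem_cliqueFinset_iff).1 hu).card_eq
  rw [mem_edgesIn] at hdt het hdu heu
  obtain ⟨d, hd⟩ := d
  obtain ⟨e, he⟩ := e
  induction d with | _ x y
  induction e with | _ z w
  have hxy : x ≠ y := (show G.Adj x y by simpa using hd).ne
  have hzw : z ≠ w := (show G.Adj z w by simpa using he).ne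
  have h3 : ∃ v, v ∈ t ∧ v ∈ u ∧ v ≠ x ∧ v ≠ y := by
    simp only [ne_eq, Subtype.mk.injEq, Sym2.eq_iff] at hde
    simp only [Sym2.mem_iff, forall_eq_or_imp, forall_eq] at het heu
    grind
  obtain ⟨v, hvt, hvu, hvx, hvy⟩ := h3
  simp only [Sym2.mem_iff, forall_eq_or_imp, forall_eq] at hdt hdu
  have hc : ({x, y, v} : Finset V).card = 3 :=
    Finset.card_eq_three.2 ⟨x, y, v, hxy, hvx.symm, hvy.symm, rfl⟩
  have h1 : {x, y, v} = t := Finset.eq_of_subset_of_card_le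
    (by intro a; simp only [Finset.mem_insert, Finset.mem_singleton]; grind) (by omega)
  have h2 : {x, y, v} = u := Finset.eq_of_subset_of_card_le
    (by intro a; simp only [Finset.mem_insert, Finset.mem_singleton]; grind) (by omega)
  exact h1.symm.trans h2

/-- The triangles of `G` containing the edge `e`. -/
def trianglesThrough (e : {e // e ∈ G.edgeFinset}) : Finset (Finset V) :=
  (G.cliqueFinset 3).filter (e ∈ edgesIn G ·)

/-! ### The two families of wedges -/

/-- The pairs of edges lying in a common triangle. -/
def wedges : Finset (Finset {e // e ∈ G.edgeFinset}) :=
  (G.cliqueFinset 3).biUnion fun t => (edgesIn G t).powersetCard 2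

lemma card_wedges : (wedges G).card = 3 * (G.cliqueFinset 3).card := by
  rw [wedges, Finset.card_biUnion]
  · rw [Finset.sum_congr rfl fun t ht => by
      rw [Finset.card_powersetCard, card_edgesIn G ht]]
    simp [mul_comm]
  · intro t ht u hu htu
    refine Finset.disjoint_left.2 ?_
    intro f hft hfu
    rw [Finset.mem_powersetCard] at hft hfu
    obtain ⟨d, e, hde, rfl⟩ := Finset.card_eq_two.1 hft.2
    exact htu (eq_of_mem_edgesIn G ht hu hde (hft.1 (by simp)) (hft.1 (by simp))
      (hfu.1 (by simp)) (hfu.1 (by simp)))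

lemma card_filter_wedges_le (e : {e // e ∈ G.edgeFinset}) :
    ((wedges G).filter (e ∈ ·)).card ≤ 2 * (trianglesThrough G e).card := by
  have hsub : (wedges G).filter (e ∈ ·) ⊆ (trianglesThrough G e).biUnion fun t =>
      ((edgesIn G t).powersetCard 2).filter (e ∈ ·) := by
    intro f hf
    simp only [wedges, trianglesThrough, Finset.mem_filter, Finset.mem_biUnion,
      Finset.mem_powersetCard] at hf ⊢
    obtain ⟨⟨t, ht, hft, hf2⟩, hef⟩ := hf
    exact ⟨t, ⟨ht, hft hef⟩, ⟨hft, hf2⟩, hef⟩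
  refine (Finset.card_le_card hsub).trans ?_
  rw [mul_comm]
  refine Finset.card_biUnion_le_card_mul _ _ _ fun t ht => ?_
  obtain ⟨ht, het⟩ := Finset.mem_filter.1 ht
  -- Of the three pairs of edges of `t`, the one complementary to `e` does not contain `e`.
  have hlt : ((edgesIn G t).powersetCard 2).filter (e ∈ ·) ⊂ (edgesIn G t).powersetCard 2 := by
    rw [Finset.filter_ssubset]
    refine ⟨(edgesIn G t).erase e, ?_, Finset.notMem_erase _ _⟩
    rw [Finset.mem_powersetCard, Finset.card_erase_of_mem het, card_edgesIn G ht]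
    exact ⟨Finset.erase_subset _ _, rfl⟩
  have := Finset.card_lt_card hlt
  rw [Finset.card_powersetCard, card_edgesIn G ht] at this
  have h3 : Nat.choose 3 2 = 3 := rfl
  omega

/-- The pairs of edges completing `e` to a triangle. -/
def pages (e : {e // e ∈ G.edgeFinset}) : Finset (Finset {e // e ∈ G.edgeFinset}) :=
  (trianglesThrough G e).image fun t => (edgesIn G t).erase e

lemma pages_subset_wedges (e : {e // e ∈ G.edgeFinset}) : pages G e ⊆ wedges G := by
  intro f hf
  obtain ⟨t, ht, rfl⟩ := Finset.mem_image.1 hf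
  obtain ⟨ht, het⟩ := Finset.mem_filter.1 ht
  refine Finset.mem_biUnion.2 ⟨t, ht, ?_⟩
  rw [Finset.mem_powersetCard, Finset.card_erase_of_mem het, card_edgesIn G ht]
  exact ⟨Finset.erase_subset _ _, rfl⟩

lemma eq_of_mem_pages {e d : {e // e ∈ G.edgeFinset}} {t u : Finset V}
    (ht : t ∈ trianglesThrough G e) (hu : u ∈ trianglesThrough G e)
    (hdt : d ∈ (edgesIn G t).erase e) (hdu : d ∈ (edgesIn G u).erase e) : t = u := by
  obtain ⟨ht, het⟩ := Finset.mem_filter.1 ht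
  obtain ⟨hu, heu⟩ := Finset.mem_filter.1 hu
  rw [Finset.mem_erase] at hdt hdu
  exact eq_of_mem_edgesIn G ht hu hdt.1 hdt.2 het hdu.2 heu

lemma card_pages (e : {e // e ∈ G.edgeFinset}) :
    (pages G e).card = (trianglesThrough G e).card := by
  refine Finset.card_image_of_injOn fun t ht u hu htu => ?_
  obtain ⟨ht', het⟩ := Finset.mem_filter.1 ht
  have hpos : 0 < ((edgesIn G t).erase e).card := by
    rw [Finset.card_erase_of_mem het, card_edgesIn G ht']
    norm_num
  obtain ⟨d, hd⟩ := Finset.card_pos.1 hpos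
  exact eq_of_mem_pages G ht hu hd (htu ▸ hd)

lemma card_filter_pages_le (e d : {e // e ∈ G.edgeFinset}) :
    ((pages G e).filter (d ∈ ·)).card ≤ 1 := by
  rw [Finset.card_le_one]
  intro f hf g hg
  simp only [pages, Finset.mem_filter, Finset.mem_image] at hf hg
  obtain ⟨⟨t, ht, rfl⟩, hdt⟩ := hf
  obtain ⟨⟨u, hu, rfl⟩, hdu⟩ := hg
  rw [eq_of_mem_pages G ht hu hdt hdu]

end Triangles

/-! ### The failure probability -/

/-- **failure probability of Algorithm A.** Let `T ≥ 216` and let `G` be a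
finite simple graph with at least `T` triangles. Keeping each edge independently with
probability `p = 6 / T^(1/3)`, the probability that every triangle of `G` has at most one
of its three edges kept is at most `0.3`. -/
theorem prob_every_triangle_at_most_one_kept_edge_le {V : Type*} [Fintype V] [DecidableEq V]
    (G : SimpleGraph V) [DecidableRel G.Adj] (T : ℝ) (hT : 216 ≤ T)
    (hT₃ : T ≤ ((G.cliqueFinset 3).card : ℝ))
    (p : ℝ) (hp : p = 6 / T ^ ((1 : ℝ) / 3)) :
    edgeKeepMeasure G p
        {ω | ∀ t ∈ G.cliqueFinset 3,
          ((Finset.univ : Finset {e // e ∈ G.edgeFinset}).filter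
            (fun e : {e // e ∈ G.edgeFinset} => (e : Sym2 V) ∈ t.sym2 ∧ ω e = true)).card ≤ 1}
      ≤ ENNReal.ofReal 0.3 := by
  have hT0 : (0 : ℝ) ≤ T := by linarith
  obtain ⟨c, hc⟩ : ∃ c, c = T ^ ((1 : ℝ) / 3) := ⟨_, rfl⟩
  have hc0 : 0 ≤ c := hc ▸ Real.rpow_nonneg hT0 _
  have hc3 : c ^ 3 = T := by
    rw [hc, ← Real.rpow_natCast, ← Real.rpow_mul hT0]
    norm_num
  have hc6 : 6 ≤ c := by
    by_contra! h
    have : c ^ 3 < 6 ^ 3 := by gcongr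
    linarith
  rw [← hc] at hp
  have hpc : p * c = 6 := by rw [hp]; field_simp
  have hp0 : 0 < p := by rw [hp]; positivity
  have hp1 : p ≤ 1 := by rw [hp, div_le_one (by linarith)]; exact hc6
  have := isProbabilityMeasure_bernoulliMeasure_s12 hp0.le hp1
  set A := {ω : {e // e ∈ G.edgeFinset} → Bool | ∀ t ∈ G.cliqueFinset 3,
          ((Finset.univ : Finset {e // e ∈ G.edgeFinset}).filter
            (fun e : {e // e ∈ G.edgeFinset} => (e : Sym2 V) ∈ t.sym2 ∧ ω e = true)).card ≤ 1}
    with hA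
  unfold edgeKeepMeasure
  have hsub : ∀ F ⊆ wedges G, A ⊆ {ω | ∀ f ∈ F, ¬ ∀ e ∈ f, ω e = true} := by
    intro F hF ω hω f hf hall
    obtain ⟨t, ht, hft⟩ := Finset.mem_biUnion.1 (hF hf)
    rw [Finset.mem_powersetCard] at hft
    have h1 := hω t ht
    have h2 : f ⊆ (Finset.univ : Finset {e // e ∈ G.edgeFinset}).filter
        (fun e : {e // e ∈ G.edgeFinset} => (e : Sym2 V) ∈ t.sym2 ∧ ω e = true) := by
      intro e he
      exact Finset.mem_filter.2
        ⟨Finset.mem_univ _, (Finset.mem_filter.1 (hft.1 he)).2, hall e he⟩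
    have h3 := Finset.card_le_card h2
    omega
  have hF2 : ∀ f ∈ wedges G, f.card = 2 := by
    intro f hf
    obtain ⟨t, _, hft⟩ := Finset.mem_biUnion.1 hf
    exact (Finset.mem_powersetCard.1 hft).2
  have hbound : ∀ F ⊆ wedges G, ∀ D : ℝ, 0 ≤ D →
      (∀ e, ((F.filter (e ∈ ·)).card : ℝ) ≤ D) →
      (Measure.pi fun _ : {e // e ∈ G.edgeFinset} => bernoulliMeasure p).real A *
        (F.card * p ^ 2) ≤ 1 + 2 * D * p := by
    intro F hF D hD0 hD
    refine le_trans ?_ (second_moment hp0 hp1 F (fun f hf => hF2 f (hF hf)) D hD0 hD)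
    exact mul_le_mul_of_nonneg_right (measureReal_mono (hsub F hF)) (by positivity)
  rw [← ofReal_measureReal]
  refine ENNReal.ofReal_le_ofReal ?_
  set P := (Measure.pi fun _ : {e // e ∈ G.edgeFinset} => bernoulliMeasure p).real A with hP
  have hP0 : 0 ≤ P := measureReal_nonneg
  by_cases hheavy : ∃ e, c ^ 2 / 2 ≤ ((trianglesThrough G e).card : ℝ)
  · obtain ⟨e, he⟩ := hheavy
    have h := hbound (pages G e) (pages_subset_wedges G e) 1 zero_le_one
      fun d => by exact_mod_cast card_filter_pages_le G e d
    rw [card_pages] at h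
    have h18 : 18 ≤ ((trianglesThrough G e).card : ℝ) * p ^ 2 := by
      calc (18 : ℝ) = (p * c) ^ 2 / 2 := by rw [hpc]; norm_num
        _ = c ^ 2 / 2 * p ^ 2 := by ring
        _ ≤ _ := by gcongr
    have := mul_le_mul_of_nonneg_left h18 hP0
    linarith
  · push Not at hheavy
    have h := hbound (wedges G) subset_rfl (c ^ 2) (by positivity) fun e => by
      have h1 : (((wedges G).filter (e ∈ ·)).card : ℝ) ≤
          2 * ((trianglesThrough G e).card : ℝ) := by
        exact_mod_cast card_filter_wedges_le G e
      linarith [hheavy e]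
    rw [card_wedges] at h
    push_cast at h
    have hM : 108 * c ≤ 3 * ((G.cliqueFinset 3).card : ℝ) * p ^ 2 := by
      calc 108 * c = 3 * (p * c) ^ 2 * c := by rw [hpc]; ring
        _ = 3 * T * p ^ 2 := by rw [← hc3]; ring
        _ ≤ _ := by gcongr
    have h1 := mul_le_mul_of_nonneg_left hM hP0
    have h2 : 2 * c ^ 2 * p = 12 * c := by
      calc 2 * c ^ 2 * p = 2 * c * (p * c) := by ring
        _ = 12 * c := by rw [hpc]; ring
    by_contra! hlt
    nlinarith
end
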